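/- For any permutation π of {1,…,N−1}, the vector B_{π(1)}(u_1) B_{π(2)}(u_2) ⋯ B_{π(N−1)}(u_{N−1}) |Ω⟩ lies in the F-span of the basis vectors {|w⟩ : w ∈ S_N}; that is, B_{π(1)}(u_1) ⋯ B_{π(N−1)}(u_{N−1}) |Ω⟩ = ∑_{w ∈ S_N} C^π_w(u_1,…,u_{N−1}) |w⟩ for some scalars C^π_w depending polynomially on u_1,…,u_{N−1}. -/

import Mathlib

noncomputable section
open scoped BigOperators

variable {F : Type*}

/-- `x ⊖ y := (x - y)/(1 + β·y)`. -/
def om [Field F] (β x y : F) : F := (x - y) / (1 + β * y)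

/-- `⊖ t := -t/(1 + β·t)`. -/
def negOm [Field F] (β t : F) : F := (-t) / (1 + β * t)

/-- The R-matrix `R^{(n)}(x,y)` on `V ⊗ V`, `V = F^n`, with entries
`R_{ij,kl} = (1 + [k<l]·β(x⊖y)) δ_{il} δ_{jk} + [k>l]·(x⊖y) δ_{ik} δ_{jl}`;
the row index is the pair `(i,j)`, the column index is the pair `(k,l)`. -/
def Rmat [Field F] (n : ℕ) (β x y : F) :
    Matrix (Fin n × Fin n) (Fin n × Fin n) F := Matrix.of fun p q =>
  (if p.1 = q.2 ∧ p.2 = q.1 then (if q.1 < q.2 then 1 + β * om β x y else 1) else 0) +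
  (if p.1 = q.1 ∧ p.2 = q.2 ∧ q.2 < q.1 then om β x y else 0)

/-- `R_{a i}(u, τ)` : the R-matrix acting on the auxiliary space (first factor)
and the `i`-th site of `H = (F^n)^{⊗N}`, identity elsewhere. -/
def Rsite [Field F] (n N : ℕ) (β u τ : F) (i : Fin N) :
    Matrix (Fin n × (Fin N → Fin n)) (Fin n × (Fin N → Fin n)) F := Matrix.of fun p q =>
  Rmat n β u τ (p.1, p.2 i) (q.1, q.2 i) *
    (if ∀ j, j ≠ i → p.2 j = q.2 j then 1 else 0)

/-- The monodromy matrix `T_a(u) = R_{aN}(u,t_N) ⋯ R_{a1}(u,t_1)` on `V_a ⊗ H`. -/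
def Tmono [Field F] (n N : ℕ) (β u : F) (t : Fin N → F) :
    Matrix (Fin n × (Fin N → Fin n)) (Fin n × (Fin N → Fin n)) F :=
  ((List.ofFn fun i : Fin N => Rsite n N β u (t i) i).reverse).prod

/-- The block `T_a(u)_{r c}` (with respect to the auxiliary space) as an operator on `H`. -/
def blockOp [Field F] (n N : ℕ) (β u : F) (t : Fin N → F) (r c : Fin n) :
    Matrix (Fin N → Fin n) (Fin N → Fin n) F :=
  Matrix.of fun s s' => Tmono n N β u t (r, s) (c, s')

/-- The natural basis vector `|n_1,…,n_N⟩` of `H` (also used as a dual basis covector). -/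
def ket [Field F] (n N : ℕ) (g : Fin N → Fin n) : (Fin N → Fin n) → F :=
  fun s => if s = g then 1 else 0

/-- The Coxeter length of a permutation: its number of inversions. -/
def permLength {N : ℕ} (w : Equiv.Perm (Fin N)) : ℕ :=
  (Finset.univ.filter fun p : Fin N × Fin N => p.1 < p.2 ∧ w p.2 < w p.1).card

/-- The longest permutation `ω_N : i ↦ N - 1 - i`. -/
def omegaPerm (N : ℕ) : Equiv.Perm (Fin N) :=
  ⟨Fin.rev, Fin.rev, fun i => Fin.rev_rev i, fun i => Fin.rev_rev i⟩

/-!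
The R-matrix moves colours between the auxiliary space and a site without creating or destroying
any, so `T_a(u)_{rc}` changes the content of a configuration (how often each colour occurs) by
`e_c - e_r`. Starting from `N` copies of the colour `0`, a string of `N - 1` operators `B_i` with
every `i ≠ 0` occurring once therefore reaches only configurations containing each colour exactly
once, i.e. permutations. The coefficients are polynomial in the spectral parameters because
`x ⊖ y` is affine in `x`.
-/

section PolynomialEntries

variable {R σ I ι : Type*} [CommSemiring R]

/-- A family of matrices, indexed by points `u` of affine space `σ → R`, whose entries are
polynomial functions of `u`; the polynomials are collected in one matrix so that products of
families correspond to products of polynomial matrices. -/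
def HasPolynomialEntries (A : (σ → R) → Matrix I I R) : Prop :=
  ∃ P : Matrix I I (MvPolynomial σ R), ∀ u, A u = P.map (MvPolynomial.eval u)

lemma hasPolynomialEntries_of_forall_entry {A : (σ → R) → Matrix I I R}
    (h : ∀ i j, ∃ p : MvPolynomial σ R, ∀ u, A u i j = MvPolynomial.eval u p) :
    HasPolynomialEntries A := by
  choose P hP using h
  exact ⟨Matrix.of P, fun u => Matrix.ext fun i j => hP i j u⟩

lemma HasPolynomialEntries.list_prod [Fintype I] [DecidableEq I]
    {A : ι → (σ → R) → Matrix I I R} (hA : ∀ a, HasPolynomialEntries (A a)) (l : List ι) :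
    HasPolynomialEntries fun u => (l.map fun a => A a u).prod := by
  choose P hP using hA
  refine ⟨(l.map P).prod, fun u => ?_⟩
  rw [← RingHom.mapMatrix_apply, map_list_prod, List.map_map]
  simp only [hP, Function.comp_def, RingHom.mapMatrix_apply]

end PolynomialEntries

section ShiftsDegree

variable {R G I ι : Type*} [Semiring R] {deg : I → G}

/-- For a basis graded by `deg`, the matrix `A` is homogeneous of degree `d`: it sends a basis
vector of degree `g` into the span of those of degree `d + g`. -/
def ShiftsDegree [Add G] (deg : I → G) (d : G) (A : Matrix I I R) : Prop :=
  ∀ i j, A i j ≠ 0 → deg i = d + deg j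

lemma shiftsDegree_one [AddZeroClass G] [DecidableEq I] :
    ShiftsDegree deg 0 (1 : Matrix I I R) := fun i j hij => by
  have heq : i = j := by_contra fun hne => hij (Matrix.one_apply_ne hne)
  rw [heq, zero_add]

lemma ShiftsDegree.mul [AddSemigroup G] [Fintype I] {d e : G} {A B : Matrix I I R}
    (hA : ShiftsDegree deg d A) (hB : ShiftsDegree deg e B) :
    ShiftsDegree deg (d + e) (A * B) := fun i j hij => by
  obtain ⟨k, -, hk⟩ := Finset.exists_ne_zero_of_sum_ne_zero hij
  rw [hA i k (left_ne_zero_of_mul hk), hB k j (right_ne_zero_of_mul hk), add_assoc]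

lemma ShiftsDegree.list_prod [AddMonoid G] [Fintype I] [DecidableEq I] {d : ι → G}
    {A : ι → Matrix I I R} (hA : ∀ a, ShiftsDegree deg (d a) (A a)) (l : List ι) :
    ShiftsDegree deg (l.map d).sum (l.map A).prod := by
  induction l with
  | nil => exact shiftsDegree_one
  | cons a l ih => exact (hA a).mul ih

end ShiftsDegree

section Content

variable {ι κ : Type*} [Fintype ι] [DecidableEq κ]

/-- The content of a configuration `s`: the function counting how often each colour occurs. It is
integer-valued so that operators can lower it. -/
def content (s : ι → κ) : κ → ℤ := ∑ j, Pi.single (s j) 1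

lemma single_add_content_eq_of_eqOn_compl {s s' : ι → κ} {i : ι} {a b : κ}
    (hcompl : ∀ j, j ≠ i → s j = s' j)
    (hi : (Pi.single a 1 + Pi.single (s i) 1 : κ → ℤ) = Pi.single b 1 + Pi.single (s' i) 1) :
    Pi.single a 1 + content s = Pi.single b 1 + content s' := by
  classical
  have hrest : ∑ j ∈ Finset.univ.erase i, (Pi.single (s j) 1 : κ → ℤ) =
      ∑ j ∈ Finset.univ.erase i, Pi.single (s' j) 1 :=
    Finset.sum_congr rfl fun j hj => by rw [hcompl j (Finset.ne_of_mem_erase hj)]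
  rw [content, content, ← Finset.add_sum_erase _ _ (Finset.mem_univ i),
    ← Finset.add_sum_erase _ _ (Finset.mem_univ i), ← add_assoc, ← add_assoc, hi, hrest]

lemma surjective_of_content_eq_one {s : ι → κ} (hs : content s = 1) : Function.Surjective s := by
  intro c
  have hc : ∑ j, (Pi.single (s j) 1 : κ → ℤ) c ≠ 0 := by
    rw [← Finset.sum_apply, ← content, hs]
    exact one_ne_zero
  obtain ⟨j, -, hj⟩ := Finset.exists_ne_zero_of_sum_ne_zero hc
  exact ⟨j, by_contra fun hne => hj (Pi.single_eq_of_ne' hne 1)⟩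

lemma sum_single_succ_sub_single_zero_add_content_zero {M : ℕ} (π : Equiv.Perm (Fin M)) :
    (∑ a, (Pi.single (π a).succ 1 - Pi.single 0 1 : Fin (M + 1) → ℤ)) +
      content (fun _ : Fin (M + 1) => (0 : Fin (M + 1))) = 1 := by
  have hone : (1 : Fin (M + 1) → ℤ) = ∑ i, Pi.single i 1 := (Finset.univ_sum_single 1).symm
  have hperm : ∑ a, (Pi.single (π a).succ 1 : Fin (M + 1) → ℤ) =
      ∑ a : Fin M, Pi.single a.succ 1 :=
    Equiv.sum_comp π fun a => (Pi.single a.succ 1 : Fin (M + 1) → ℤ)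
  rw [content, Finset.sum_sub_distrib, hperm, hone, Fin.sum_univ_succ, Fin.sum_univ_succ]
  abel

end Content

section Monodromy

variable [Field F] {n N : ℕ} (β : F)

lemma exists_om_eq_eval {σ : Type*} (τ : F) (a : σ) :
    ∃ p : MvPolynomial σ F, ∀ u, om β (u a) τ = MvPolynomial.eval u p :=
  ⟨(MvPolynomial.X a - MvPolynomial.C τ) * MvPolynomial.C (1 + β * τ)⁻¹, fun u => by
    simp [om, div_eq_mul_inv]⟩

lemma Rsite_hasPolynomialEntries {σ : Type*} (τ : F) (i : Fin N) (a : σ) :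
    HasPolynomialEntries fun u : σ → F => Rsite n N β (u a) τ i := by
  obtain ⟨omPoly, homPoly⟩ := exists_om_eq_eval β τ a
  refine hasPolynomialEntries_of_forall_entry fun p q => ⟨
    ((if p.1 = q.2 i ∧ p.2 i = q.1 then
        (if q.1 < q.2 i then 1 + MvPolynomial.C β * omPoly else 1) else 0) +
      (if p.1 = q.1 ∧ p.2 i = q.2 i ∧ q.2 i < q.1 then omPoly else 0)) *
      (if ∀ j, j ≠ i → p.2 j = q.2 j then 1 else 0), fun u => ?_⟩
  simp only [Rsite, Rmat, Matrix.of_apply]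
  split_ifs <;> simp [homPoly]

lemma eq_swap_or_eq_of_Rmat_apply_ne_zero {x y : F} {p q : Fin n × Fin n}
    (h : Rmat n β x y p q ≠ 0) :
    q = p.swap ∨ q = p := by
  contrapose! h
  have hswap : ¬(p.1 = q.2 ∧ p.2 = q.1) := fun hpq => h.1 (Prod.ext hpq.2.symm hpq.1.symm)
  have hid : ¬(p.1 = q.1 ∧ p.2 = q.2 ∧ q.2 < q.1) := fun hpq =>
    h.2 (Prod.ext hpq.1.symm hpq.2.1.symm)
  rw [Rmat, Matrix.of_apply, if_neg hswap, if_neg hid, add_zero]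

lemma Rsite_shiftsDegree (u τ : F) (i : Fin N) :
    ShiftsDegree (fun p : Fin n × (Fin N → Fin n) => Pi.single p.1 1 + content p.2) 0
      (Rsite n N β u τ i) := by
  intro p q hpq
  rw [zero_add]
  refine single_add_content_eq_of_eqOn_compl
    (by_contra fun hne => right_ne_zero_of_mul hpq (if_neg hne)) ?_
  rcases eq_swap_or_eq_of_Rmat_apply_ne_zero β (left_ne_zero_of_mul hpq) with hswap | hid
  · obtain ⟨hq, hqi⟩ := Prod.ext_iff.mp hswap
    simp only [Prod.swap] at hq hqi
    rw [hq, hqi, add_comm]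
  · obtain ⟨hq, hqi⟩ := Prod.ext_iff.mp hid
    simp only at hq hqi
    rw [hq, hqi]

variable (t : Fin N → F)

lemma Tmono_eq_prod_map (u : F) :
    Tmono n N β u t = ((List.finRange N).reverse.map fun i => Rsite n N β u (t i) i).prod := by
  rw [Tmono, List.ofFn_eq_map, List.map_reverse]

lemma blockOp_hasPolynomialEntries {σ : Type*} (a : σ) (r c : Fin n) :
    HasPolynomialEntries fun u : σ → F => blockOp n N β (u a) t r c := by
  obtain ⟨P, hP⟩ := HasPolynomialEntries.list_prod
    (fun i => Rsite_hasPolynomialEntries (n := n) β (t i) i a) (List.finRange N).reverse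
  refine ⟨Matrix.of fun s s' => P (r, s) (c, s'), fun u => Matrix.ext fun s s' => ?_⟩
  simp only [blockOp, Matrix.of_apply, Tmono_eq_prod_map]
  exact congrFun₂ (hP u) (r, s) (c, s')

lemma blockOp_shiftsDegree (u : F) (r c : Fin n) :
    ShiftsDegree content (Pi.single c 1 - Pi.single r 1) (blockOp n N β u t r c) := by
  intro s s' hss'
  rw [blockOp, Matrix.of_apply, Tmono_eq_prod_map] at hss'
  have hconserved : Pi.single r 1 + content s = Pi.single c 1 + content s' := by
    simpa only [List.sum_map_zero, zero_add] using ShiftsDegree.list_prod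
      (fun i => Rsite_shiftsDegree β u (t i) i) (List.finRange N).reverse (r, s) (c, s') hss'
  rw [sub_add_eq_add_sub, ← hconserved, add_sub_cancel_left]

end Monodromy

section Kets

lemma eq_sum_smul_single_of_support_subset_range {R I ι : Type*} [Semiring R] [DecidableEq I]
    [Fintype ι] {f : ι → I} (hf : Function.Injective f) {v : I → R}
    (hv : Function.support v ⊆ Set.range f) :
    v = ∑ k, v (f k) • Pi.single (f k) 1 := by
  funext i
  rw [Finset.sum_apply]
  by_cases hi : i ∈ Set.range f
  · obtain ⟨k, rfl⟩ := hi
    rw [Fintype.sum_eq_single k fun l hl => by simp [hf.ne hl.symm]]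
    simp
  · have hne : ∀ k, f k ≠ i := fun k hk => hi ⟨k, hk⟩
    simp [Function.notMem_support.mp fun hvi => hi (hv hvi), hne]

lemma ket_eq_single [Field F] {n N : ℕ} (g : Fin N → Fin n) :
    (ket n N g : (Fin N → Fin n) → F) = Pi.single g 1 :=
  funext fun s => (Pi.single_apply g 1 s).symm

lemma eq_sum_perm_smul_ket [Field F] {N : ℕ} {v : (Fin N → Fin N) → F}
    (hv : ∀ s, v s ≠ 0 → Function.Surjective s) :
    v = ∑ w : Equiv.Perm (Fin N), v w • ket N N w := by
  simp only [ket_eq_single]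
  exact eq_sum_smul_single_of_support_subset_range DFunLike.coe_injective fun s hs =>
    ⟨Equiv.ofBijective s (Finite.surjective_iff_bijective.mp (hv s hs)), rfl⟩

end Kets

lemma surjective_of_B_string_apply_ne_zero [Field F] {M : ℕ} {β : F} {t : Fin (M + 1) → F}
    {π : Equiv.Perm (Fin M)} {u : Fin M → F} {s : Fin (M + 1) → Fin (M + 1)}
    (hs : (List.ofFn fun a => blockOp (M + 1) (M + 1) β (u a) t 0 (π a).succ).prod s
      (fun _ => 0) ≠ 0) :
    Function.Surjective s := by
  rw [List.ofFn_eq_map] at hs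
  have hcontent := ShiftsDegree.list_prod
    (fun a => blockOp_shiftsDegree β t (u a) 0 (π a).succ) (List.finRange M) s _ hs
  rw [← List.ofFn_eq_map, List.sum_ofFn,
    sum_single_succ_sub_single_zero_add_content_zero] at hcontent
  exact surjective_of_content_eq_one hcontent

theorem B_string_span_general [Field F] (M : ℕ) (β : F) (t : Fin (M + 1) → F)
    (π : Equiv.Perm (Fin M)) (_ht : ∀ i, 1 + β * t i ≠ 0) :
    ∃ C : Equiv.Perm (Fin (M + 1)) → MvPolynomial (Fin M) F,
      ∀ u : Fin M → F,
        Matrix.mulVec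
            ((List.ofFn fun a : Fin M =>
                blockOp (M + 1) (M + 1) β (u a) t 0 ((π a).succ)).prod)
            (ket (M + 1) (M + 1) fun _ => 0) =
          ∑ w : Equiv.Perm (Fin (M + 1)),
            MvPolynomial.eval u (C w) • ket (M + 1) (M + 1) fun j => w j := by
  obtain ⟨P, hP⟩ := HasPolynomialEntries.list_prod
    (fun a => blockOp_hasPolynomialEntries β t a 0 (π a).succ) (List.finRange M)
  refine ⟨fun w => P w fun _ => 0, fun u => ?_⟩
  have hentry : ∀ s, (List.ofFn fun a => blockOp (M + 1) (M + 1) β (u a) t 0 (π a).succ).prod s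
      (fun _ => 0) = MvPolynomial.eval u (P s fun _ => 0) := fun s => by
    rw [List.ofFn_eq_map]
    exact congrFun₂ (hP u) s _
  rw [ket_eq_single, Matrix.mulVec_single_one]
  simp only [← hentry]
  exact eq_sum_perm_smul_ket fun s => surjective_of_B_string_apply_ne_zero

lemma one_add_mul_ne_zero_of_algebraicIndependent {R A ι : Type*} [CommRing R] [Nontrivial R]
    [CommRing A] [Algebra R A] {x : ι → A} (hx : AlgebraicIndependent R x) (i j : ι) :
    1 + x i * x j ≠ 0 := by
  intro hzero
  have hpoly : (1 + MvPolynomial.X i * MvPolynomial.X j : MvPolynomial ι R) = 0 :=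
    hx.eq_zero_of_aeval_eq_zero _ (by simpa using hzero)
  simpa using congrArg MvPolynomial.constantCoeff hpoly

/-- **Expansion in permutation basis vectors** (Lemma `l0`), for `n = N = M+2`:
for any permutation `π` of `{1,…,N-1}`, the vector
`B_{π(1)}(u_1) ⋯ B_{π(N-1)}(u_{N-1}) |Ω⟩` equals `∑_{w ∈ S_N} C^π_w(u) |w⟩`
with coefficients `C^π_w` depending polynomially on `u_1,…,u_{N-1}`. -/
theorem B_string_span [Field F] [CharZero F] (M : ℕ) (β : F) (t : Fin (M + 2) → F)
    (π : Equiv.Perm (Fin (M + 1)))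
    (hind : AlgebraicIndependent ℚ (Sum.elim (fun _ : Unit => β) t)) :
    ∃ C : Equiv.Perm (Fin (M + 2)) → MvPolynomial (Fin (M + 1)) F,
      ∀ u : Fin (M + 1) → F,
        Matrix.mulVec
            ((List.ofFn fun a : Fin (M + 1) =>
                blockOp (M + 2) (M + 2) β (u a) t 0 ((π a).succ)).prod)
            (ket (M + 2) (M + 2) fun _ => 0) =
          ∑ w : Equiv.Perm (Fin (M + 2)),
            MvPolynomial.eval u (C w) • ket (M + 2) (M + 2) fun j => w j :=
  B_string_span_general (M + 1) β t π fun i =>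
    one_add_mul_ne_zero_of_algebraicIndependent hind (Sum.inl ()) (Sum.inr i)
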